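/- Let D ⊆ ℂ be a convex domain (nonempty open convex set) and let f : D → ℂ be analytic with Re f′(z) > 0 for all z ∈ D. Then f is univalent (injective) on D. -/

import Mathlib

/-!
For distinct `z, w ∈ D` the segment from `z` to `w` lies in `D`, and along it the real function
`t ↦ Re (f (z + t (w - z)) / (w - z))` has derivative `Re f' (z + t (w - z)) > 0`. If `f z = f w`,
it takes equal values at `0` and `1`, contradicting Rolle's theorem.
-/

open Complex

theorem stmt_5 (D : Set ℂ) (hO : IsOpen D) (hne : D.Nonempty) (hconv : Convex ℝ D)
    (f : ℂ → ℂ) (hf : DifferentiableOn ℂ f D)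
    (hre : ∀ z ∈ D, 0 < (deriv f z).re) :
    Set.InjOn f D := by
  intro z hz w hw hfzw
  by_contra hzw
  have hne' : w - z ≠ 0 := sub_ne_zero.2 (Ne.symm hzw)
  have hmem : ∀ t ∈ Set.Icc (0 : ℝ) 1, z + (t : ℂ) * (w - z) ∈ D := fun t ht => by
    simpa using hconv.add_smul_sub_mem hz hw ht
  have hderiv : ∀ t ∈ Set.Icc (0 : ℝ) 1,
      HasDerivAt (fun s : ℝ => (f (z + (s : ℂ) * (w - z)) / (w - z)).re)
        (deriv f (z + (t : ℂ) * (w - z))).re t := by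
    intro t ht
    have hf' : HasDerivAt f (deriv f (z + (t : ℂ) * (w - z))) (z + (t : ℂ) * (w - z)) :=
      (hf.differentiableAt (hO.mem_nhds (hmem t ht))).hasDerivAt
    have hline : HasDerivAt (fun s : ℂ => z + s * (w - z)) (w - z) (t : ℂ) := by
      simpa using ((hasDerivAt_id (t : ℂ)).mul_const (w - z)).const_add z
    have hquot := (hf'.comp (t : ℂ) hline).div_const (w - z)
    rw [mul_div_cancel_right₀ _ hne'] at hquot
    exact hquot.real_of_complex
  obtain ⟨c, hc, hc0⟩ := exists_hasDerivAt_eq_zero (zero_lt_one' ℝ)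
    (fun t ht => (hderiv t ht).continuousAt.continuousWithinAt) (by simp [hfzw])
    (fun t ht => hderiv t (Set.Ioo_subset_Icc_self ht))
  exact (hre _ (hmem c (Set.Ioo_subset_Icc_self hc))).ne' hc0
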